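/- arXiv:1407.0263 — 2 statements merged into one kernel-verified Lean document; each statement's English description precedes it below -/
import Mathlib

section
/- Let n ≥ 1 and let E be a real normed vector space. Let χ : ℝ × E → Matrix (Fin n) (Fin n) ℝ be twice continuously differentiable with χ(t,x) invertible for all (t,x), and let γ₀ : E → (E →L[ℝ] Matrix (Fin n) (Fin n) ℝ) be any matrix-valued one-form. Define ν(t,x) := (∂_tχ(t,x)) * χ(t,x)⁻¹ and γ(t,x)(w) := χ(t,x) * (γ₀(x) w) * χ(t,x)⁻¹ − (d_xχ(t,x) w) * χ(t,x)⁻¹ (i.e. γ(t) = θ_{χ(t)⁻¹}(γ₀) = χγ₀χ⁻¹ + χ d(χ⁻¹)). Then: (i) if χ(0,x) = 1 for all x, then γ(0,x) = γ₀(x) for all x; and (ii) for all (t,x) and all w ∈ E, ∂_t(γ(t,x)(w)) + (d_xν(t,x))(w) + ⁅γ(t,x)(w), ν(t,x)⁆ = 0; that is, γ solves the affine advection equation γ̇ + d^γν = 0, where d^γν := dν + ad_γν and (ad_γν)(w) := ⁅γ(w), ν⁆. -/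
open MeasureTheory

attribute [local instance] Matrix.normedAddCommGroup Matrix.normedSpace

theorem aux_dt {E M : Type*} [NormedAddCommGroup E] [NormedSpace ℝ E]
    [NormedAddCommGroup M] [NormedSpace ℝ M] {G : ℝ × E → M} {G' : ℝ × E →L[ℝ] M} {t : ℝ} {x : E}
    (h : HasFDerivAt G G' (t, x)) : deriv (fun s => G (s, x)) t = G' (1, 0) := by
  have h1 : HasDerivAt (fun s : ℝ => (s, x)) ((1 : ℝ), (0 : E)) t :=
    (hasDerivAt_id t).prodMk (hasDerivAt_const t x)
  exact (h.comp_hasDerivAt t h1).deriv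

theorem aux_dx {E M : Type*} [NormedAddCommGroup E] [NormedSpace ℝ E]
    [NormedAddCommGroup M] [NormedSpace ℝ M] {G : ℝ × E → M} {G' : ℝ × E →L[ℝ] M} {t : ℝ} {x : E}
    (h : HasFDerivAt G G' (t, x)) (w : E) : fderiv ℝ (fun y => G (t, y)) x w = G' (0, w) := by
  have h1 : HasFDerivAt (fun y : E => (t, y)) (ContinuousLinearMap.inr ℝ ℝ E) x :=
    hasFDerivAt_prodMk_right t x
  have h2 : HasFDerivAt (fun y => G (t, y)) (G'.comp (ContinuousLinearMap.inr ℝ ℝ E)) x :=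
    h.comp x h1
  rw [h2.fderiv]; simp

theorem aux_app {V M : Type*} [NormedAddCommGroup V] [NormedSpace ℝ V]
    [NormedAddCommGroup M] [NormedSpace ℝ M] {G : V → V →L[ℝ] M} {G' : V →L[ℝ] V →L[ℝ] M} {p : V}
    (h : HasFDerivAt G G' p) (v : V) :
    ∃ D : V →L[ℝ] M, HasFDerivAt (fun q => G q v) D p ∧ ∀ u, D u = G' u v :=
  ⟨_, (ContinuousLinearMap.apply ℝ M v).hasFDerivAt.comp p h, fun _ => rfl⟩

theorem aux_mul {n : ℕ} {V : Type*} [NormedAddCommGroup V] [NormedSpace ℝ V]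
    {A B : V → Matrix (Fin n) (Fin n) ℝ} {A' B' : V →L[ℝ] Matrix (Fin n) (Fin n) ℝ} {p : V}
    (hA : HasFDerivAt A A' p) (hB : HasFDerivAt B B' p) :
    ∃ D : V →L[ℝ] Matrix (Fin n) (Fin n) ℝ, HasFDerivAt (fun q => A q * B q) D p ∧
      ∀ v, D v = A p * B' v + A' v * B p := by
  let L : Matrix (Fin n) (Fin n) ℝ →L[ℝ] Matrix (Fin n) (Fin n) ℝ →L[ℝ] Matrix (Fin n) (Fin n) ℝ :=
    LinearMap.toContinuousLinearMap
      ((LinearMap.toContinuousLinearMap (𝕜 := ℝ) (E := Matrix (Fin n) (Fin n) ℝ)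
        (F' := Matrix (Fin n) (Fin n) ℝ)).toLinearMap ∘ₗ LinearMap.mul ℝ (Matrix (Fin n) (Fin n) ℝ))
  exact ⟨_, L.hasFDerivAt_of_bilinear hA hB, fun v => rfl⟩

theorem aux_inv_diff {n : ℕ} {V : Type*} [NormedAddCommGroup V] [NormedSpace ℝ V]
    {A : V → Matrix (Fin n) (Fin n) ℝ} {A' : V →L[ℝ] Matrix (Fin n) (Fin n) ℝ} {p : V}
    (hA : HasFDerivAt A A' p) (hu : IsUnit (A p)) :
    DifferentiableAt ℝ (fun q => (A q)⁻¹) p := by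
  have hent : ∀ i j, DifferentiableAt ℝ (fun q => A q i j) p := fun i j =>
    differentiableAt_pi.1 (differentiableAt_pi.1 hA.differentiableAt i) j
  have hdet : ∀ B : V → Matrix (Fin n) (Fin n) ℝ,
      (∀ i j, DifferentiableAt ℝ (fun q => B q i j) p) →
      DifferentiableAt ℝ (fun q => (B q).det) p := by
    intro B hB
    simp only [Matrix.det_apply']
    fun_prop
  have hd := hdet A hent
  have h0 : (A p).det ≠ 0 := ((Matrix.isUnit_iff_isUnit_det _).1 hu).ne_zero
  refine differentiableAt_pi.2 fun i => differentiableAt_pi.2 fun j => ?_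
  simp only [Matrix.inv_def, Matrix.smul_apply, Ring.inverse_eq_inv', smul_eq_mul,
    Matrix.adjugate_apply]
  refine (hd.inv h0).mul (hdet _ fun k l => ?_)
  by_cases hk : k = j
  · subst hk; simp
  · simpa [Matrix.updateRow_ne hk] using hent k l

theorem aux_inv {n : ℕ} {V : Type*} [NormedAddCommGroup V] [NormedSpace ℝ V]
    {A : V → Matrix (Fin n) (Fin n) ℝ} {A' : V →L[ℝ] Matrix (Fin n) (Fin n) ℝ} {p : V}
    (hA : HasFDerivAt A A' p) (hu : ∀ q, IsUnit (A q)) :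
    ∃ D : V →L[ℝ] Matrix (Fin n) (Fin n) ℝ, HasFDerivAt (fun q => (A q)⁻¹) D p ∧
      ∀ v, D v = - ((A p)⁻¹ * A' v * (A p)⁻¹) := by
  have hd := (aux_inv_diff hA (hu p)).hasFDerivAt
  refine ⟨_, hd, fun v => ?_⟩
  obtain ⟨D, hD, hDv⟩ := aux_mul hA hd
  have h1 : (fun q => A q * (A q)⁻¹) = fun _ => 1 := by
    funext q
    exact Matrix.mul_nonsing_inv _ ((Matrix.isUnit_iff_isUnit_det _).1 (hu q))
  rw [h1] at hD
  have h0 : D = 0 := hD.unique (hasFDerivAt_const _ _)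
  have h2 := hDv v
  rw [h0] at h2
  have h3 : A p * (fderiv ℝ (fun q => (A q)⁻¹) p) v = - (A' v * (A p)⁻¹) :=
    eq_neg_of_add_eq_zero_left h2.symm
  have h4 := Matrix.nonsing_inv_mul _ ((Matrix.isUnit_iff_isUnit_det _).1 (hu p))
  calc _ = (A p)⁻¹ * (A p * (fderiv ℝ (fun q => (A q)⁻¹) p) v) := by
        rw [← mul_assoc, h4, one_mul]
    _ = _ := by rw [h3, mul_neg, mul_assoc]

theorem aux_zero {R : Type*} [Ring R] (a b : R) : a * 0 + b = b := by simp

theorem aux_alg {R : Type*} [Ring R] {X Y g a b m m2 Q P S N I J c u : R} (h : Y * X = 1)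
    (hQ : Q = X * g * I + P * Y) (hP : P = a * g) (hS : S = b * I + m * Y)
    (hN : N = a * J + m2 * Y) (hm : m2 = m) (hI : I = -(Y * a * Y)) (hJ : J = -(Y * b * Y))
    (hc : c = X * g * Y - b * Y) (hu : u = a * Y) :
    Q - S + N + ⁅c, u⁆ = 0 := by
  subst hQ hP hS hN hm hI hJ hc hu
  have h5 : ∀ Z, Y * (X * Z) = Z := fun Z => by
    rw [← mul_assoc, h, one_mul]
  rw [Ring.lie_def]
  simp only [mul_sub, sub_mul, mul_neg, mul_assoc, h5]
  abel

/-- For a curve `χ(t)` with `ν = χ̇χ⁻¹`, the one-form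
`γ(t) = θ_{χ(t)⁻¹}(γ₀) = χγ₀χ⁻¹ + χ d(χ⁻¹)` has initial value `γ₀` (when `χ(0) = 1`)
and solves the affine advection equation `γ̇ + d^γν = 0`, i.e.
`∂_t(γ(t,x)(w)) + (d_xν(t,x))(w) + ⁅γ(t,x)(w), ν(t,x)⁆ = 0`. -/
theorem advected_connection_solves_affine_advection
    {n : ℕ} (hn : 1 ≤ n)
    {E : Type*} [NormedAddCommGroup E] [NormedSpace ℝ E]
    (χ : ℝ × E → Matrix (Fin n) (Fin n) ℝ)
    (hχ : ContDiff ℝ 2 χ)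
    (hinv : ∀ p : ℝ × E, IsUnit (χ p))
    (γ₀ : E → (E →L[ℝ] Matrix (Fin n) (Fin n) ℝ))
    (ν : ℝ → E → Matrix (Fin n) (Fin n) ℝ)
    (hν : ∀ t x, ν t x = deriv (fun s => χ (s, x)) t * (χ (t, x))⁻¹)
    (γ : ℝ → E → E → Matrix (Fin n) (Fin n) ℝ)
    (hγ : ∀ t x w, γ t x w =
      χ (t, x) * (γ₀ x w) * (χ (t, x))⁻¹
        - (fderiv ℝ (fun y => χ (t, y)) x w) * (χ (t, x))⁻¹) :
    ((∀ x, χ (0, x) = 1) → ∀ x w, γ 0 x w = γ₀ x w)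
    ∧ (∀ t x w,
        deriv (fun s => γ s x w) t + fderiv ℝ (fun y => ν t y) x w
          + ⁅γ t x w, ν t x⁆ = 0) := by
  have hF : ∀ p, HasFDerivAt χ (fderiv ℝ χ p) p := fun p =>
    (hχ.differentiable (by norm_num) p).hasFDerivAt
  have hF2 : ∀ p, HasFDerivAt (fderiv ℝ χ) (fderiv ℝ (fderiv ℝ χ) p) p := fun p =>
    ((hχ.fderiv_right (m := 1) (by norm_num)).differentiable (by norm_num) p).hasFDerivAt
  have hν' : ∀ t x, ν t x = fderiv ℝ χ (t, x) (1, 0) * (χ (t, x))⁻¹ := fun t x => by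
    have e : deriv (fun s => χ (s, x)) t = fderiv ℝ χ (t, x) (1, 0) := aux_dt (hF (t, x))
    rw [hν, e]
  have hγ' : ∀ t x w, γ t x w = χ (t, x) * (γ₀ x w) * (χ (t, x))⁻¹
        - (fderiv ℝ χ (t, x) (0, w)) * (χ (t, x))⁻¹ := fun t x w => by
    have e : fderiv ℝ (fun y => χ (t, y)) x w = fderiv ℝ χ (t, x) (0, w) := aux_dx (hF (t, x)) w
    rw [hγ, e]
  constructor
  · intro h0 x w
    have : (fun y => χ (0, y)) = fun _ => 1 := funext h0
    rw [hγ, this, h0]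
    simp
  · intro t x w
    obtain ⟨S, hS, hSv⟩ := aux_app (hF2 (t, x)) (1, 0)
    obtain ⟨T, hT, hTv⟩ := aux_app (hF2 (t, x)) (0, w)
    have hsymm : fderiv ℝ (fderiv ℝ χ) (t, x) (0, w) (1, 0)
        = fderiv ℝ (fderiv ℝ χ) (t, x) (1, 0) (0, w) :=
      second_derivative_symmetric hF (hF2 (t, x)) _ _
    obtain ⟨I, hI, hIv⟩ := aux_inv (hF (t, x)) hinv
    obtain ⟨N, hN, hNv⟩ := aux_mul hS hI
    obtain ⟨P, hP, hPv⟩ := aux_mul (hF (t, x)) (hasFDerivAt_const (γ₀ x w) (t, x))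
    obtain ⟨Q, hQ, hQv⟩ := aux_mul hP hI
    obtain ⟨R, hR, hRv⟩ := aux_mul hT hI
    have e1 : deriv (fun s => γ s x w) t = (Q - R) (1, 0) := by
      simp only [hγ']
      exact aux_dt (hQ.sub hR)
    have e2 : fderiv ℝ (fun y => ν t y) x w = N (0, w) := by
      simp only [hν']
      exact aux_dx hN w
    have e3 : (Q - R) (1, 0) = Q (1, 0) - R (1, 0) := rfl
    have h4 := Matrix.nonsing_inv_mul _ ((Matrix.isUnit_iff_isUnit_det _).1 (hinv (t, x)))
    have hST : S (0, w) = T (1, 0) := (hSv _).trans (hsymm.trans (hTv _).symm)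
    have hP1 : P (1, 0) = fderiv ℝ χ (t, x) (1, 0) * γ₀ x w :=
      (hPv (1, 0)).trans (aux_zero _ _)
    rw [e1, e2, e3]
    exact aux_alg h4 (hQv _) hP1 (hRv _) (hNv _) hST (hIv _) (hIv _)
      (hγ' t x w) (hν' t x)
end

section
/- Let n ≥ 1, let E be a real normed vector space, and let s : ℝ × E → Matrix (Fin n) (Fin n) ℝ be twice continuously differentiable with s(ε,x) invertible for all (ε,x); interpret ε as a variation parameter. Define the family of matrix-valued one-forms σ_ε(x)(w) := (d_x s(ε,x) w) * s(ε,x)⁻¹ and the infinitesimal variation η(x) := (∂_ε s(ε,x)|_{ε=0}) * s(0,x)⁻¹. Then for every x ∈ E and w ∈ E: ∂_ε(σ_ε(x)(w))|_{ε=0} = (dη(x))(w) − ⁅σ_0(x)(w), η(x)⁆. That is, vertical variations of a section induce exactly the constrained variations δσ̄ = dη − [σ̄, η] of its reduced first jet extension. -/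
open MeasureTheory

attribute [local instance] Matrix.normedAddCommGroup Matrix.normedSpace

theorem aux_comp {P F G : Type*} [NormedAddCommGroup P] [NormedSpace ℝ P]
    [NormedAddCommGroup F] [NormedSpace ℝ F] [NormedAddCommGroup G] [NormedSpace ℝ G]
    (L : F →L[ℝ] G) (s : P → F) (hs : ContDiff ℝ 2 s) : ContDiff ℝ 2 (fun p => L (s p)) :=
  L.contDiff.comp hs

theorem aux_general {A : Type*} [NormedRing A] [NormedAlgebra ℝ A] [CompleteSpace A]
    {E : Type*} [NormedAddCommGroup E] [NormedSpace ℝ E]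
    (s : ℝ × E → A) (hs : ContDiff ℝ 2 s) (hinv : ∀ p : ℝ × E, IsUnit (s p))
    (x w : E) :
    deriv (fun e : ℝ => (fderiv ℝ (fun y => s (e, y)) x w) * Ring.inverse (s (e, x))) 0
      = fderiv ℝ (fun x => deriv (fun e => s (e, x)) 0 * Ring.inverse (s (0, x))) x w
        - (((fderiv ℝ (fun y => s (0, y)) x w) * Ring.inverse (s (0, x))) *
            (deriv (fun e => s (e, x)) 0 * Ring.inverse (s (0, x)))
          - (deriv (fun e => s (e, x)) 0 * Ring.inverse (s (0, x))) *
            ((fderiv ℝ (fun y => s (0, y)) x w) * Ring.inverse (s (0, x)))) := by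
  have hd : ∀ p, HasFDerivAt s (fderiv ℝ s p) p := fun p =>
    (hs.differentiable (by norm_num) p).hasFDerivAt
  have hi2 : ∀ (e : ℝ) (y : E), HasFDerivAt (fun y : E => ((e, y) : ℝ × E))
      (ContinuousLinearMap.inr ℝ ℝ E) y := fun e y => hasFDerivAt_prodMk_right e y
  have hi1 : ∀ (e : ℝ) (y : E), HasDerivAt (fun e : ℝ => ((e, y) : ℝ × E)) (1, 0) e :=
    fun e y => (hasDerivAt_id e).prodMk (hasDerivAt_const e y)
  have h1 : ∀ (e : ℝ) (y v : E), fderiv ℝ (fun y => s (e, y)) y v = fderiv ℝ s (e, y) (0, v) := by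
    intro e y v
    have := ((hd (e, y)).comp y (hi2 e y)).fderiv
    simp only [Function.comp_def] at this
    rw [this]; simp
  have h2 : ∀ (y : E), deriv (fun e => s (e, y)) 0 = fderiv ℝ s (0, y) (1, 0) := by
    intro y
    exact ((hd (0, y)).comp_hasDerivAt (0 : ℝ) (hi1 0 y)).deriv
  simp only [h1, h2]
  have hG : HasFDerivAt (fderiv ℝ s) (fderiv ℝ (fderiv ℝ s) (0, x)) (0, x) :=
    ((hs.fderiv_right (m := 1) (by norm_num)).differentiable (by norm_num) _).hasFDerivAt
  have hsymm : IsSymmSndFDerivAt ℝ s (0, x) :=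
    hs.contDiffAt.isSymmSndFDerivAt (by simp)
  obtain ⟨u, hu⟩ := hinv (0, x)
  have hV : HasFDerivAt (fun p => Ring.inverse (s p)) _ (0, x) :=
    HasFDerivAt.comp (g := Ring.inverse) (0, x) (by rw [← hu]; exact hasFDerivAt_ringInverse (𝕜 := ℝ) u) (hd (0, x))
  have hF : ∀ v : ℝ × E, HasFDerivAt (fun p => fderiv ℝ s p v * Ring.inverse (s p)) _ (0, x) :=
    fun v => (hG.clm_apply (hasFDerivAt_const v _)).mul' hV
  have e1 := ((hF (0, w)).comp_hasDerivAt (0 : ℝ) (hi1 0 x)).deriv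
  have e2 := ((hF (1, 0)).comp x (hi2 0 x)).fderiv
  simp only [Function.comp_def] at e1 e2
  rw [e1, e2]
  have hVu : Ring.inverse (s (0, x)) = (↑u⁻¹ : A) := by rw [← hu]; simp
  have hsy := hsymm (1, 0) (0, w)
  simp [hVu, hsy]
  noncomm_ring


theorem aux_matrix {n : ℕ}
    {E : Type*} [NormedAddCommGroup E] [NormedSpace ℝ E]
    (s : ℝ × E → Matrix (Fin n) (Fin n) ℝ)
    (hs : ContDiff ℝ 2 s)
    (hinv : ∀ p : ℝ × E, IsUnit (s p)) (x w : E) :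
    deriv (fun e : ℝ => (fderiv ℝ (fun y => s (e, y)) x w) * Ring.inverse (s (e, x))) 0
      = fderiv ℝ (fun x => deriv (fun e => s (e, x)) 0 * Ring.inverse (s (0, x))) x w
        - (((fderiv ℝ (fun y => s (0, y)) x w) * Ring.inverse (s (0, x))) *
            (deriv (fun e => s (e, x)) 0 * Ring.inverse (s (0, x)))
          - (deriv (fun e => s (e, x)) 0 * Ring.inverse (s (0, x))) *
            ((fderiv ℝ (fun y => s (0, y)) x w) * Ring.inverse (s (0, x)))) := by
  let R : NormedRing (Matrix (Fin n) (Fin n) ℝ) := Matrix.linftyOpNormedRing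
  let Al : NormedAlgebra ℝ (Matrix (Fin n) (Fin n) ℝ) := Matrix.linftyOpNormedAlgebra
  have hC : @CompleteSpace (Matrix (Fin n) (Fin n) ℝ) R.toMetricSpace.toUniformSpace :=
    inferInstanceAs (CompleteSpace (Fin n → Fin n → ℝ))
  have hs' : @ContDiff ℝ _ (ℝ × E) _ _ (Matrix (Fin n) (Fin n) ℝ)
      R.toNonUnitalNormedRing.toNormedAddCommGroup Al.toNormedSpace 2 s :=
    @aux_comp (ℝ × E) (Matrix (Fin n) (Fin n) ℝ) (Matrix (Fin n) (Fin n) ℝ) _ _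
      Matrix.normedAddCommGroup Matrix.normedSpace
      R.toNonUnitalNormedRing.toNormedAddCommGroup Al.toNormedSpace
      (ContinuousLinearMap.id ℝ (Matrix (Fin n) (Fin n) ℝ)) s hs
  exact @aux_general (Matrix (Fin n) (Fin n) ℝ) R Al hC E _ _ s hs' hinv x w

/-- Vertical variations of a section induce exactly the constrained variations
`δσ̄ = dη − [σ̄, η]` of its reduced first jet extension `σ̄ = (ds̄)s̄⁻¹`,
with `η = (δs̄)s̄⁻¹`. -/
theorem variations_of_reduced_jet_extension
    {n : ℕ} (hn : 1 ≤ n)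
    {E : Type*} [NormedAddCommGroup E] [NormedSpace ℝ E]
    (s : ℝ × E → Matrix (Fin n) (Fin n) ℝ)
    (hs : ContDiff ℝ 2 s)
    (hinv : ∀ p : ℝ × E, IsUnit (s p))
    (σ : ℝ → E → E → Matrix (Fin n) (Fin n) ℝ)
    (hσ : ∀ ε x w, σ ε x w = (fderiv ℝ (fun y => s (ε, y)) x w) * (s (ε, x))⁻¹)
    (η : E → Matrix (Fin n) (Fin n) ℝ)
    (hη : ∀ x, η x = deriv (fun e => s (e, x)) 0 * (s (0, x))⁻¹) :
    ∀ (x w : E),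
      deriv (fun e => σ e x w) 0 = fderiv ℝ η x w - ⁅σ 0 x w, η x⁆ := by

  intro x w
  have hη' : η = fun x => deriv (fun e => s (e, x)) 0 * Ring.inverse (s (0, x)) := by
    funext y; rw [hη, Matrix.nonsing_inv_eq_ringInverse]
  have hσ' : ∀ ε x w, σ ε x w =
      (fderiv ℝ (fun y => s (ε, y)) x w) * Ring.inverse (s (ε, x)) := by
    intro ε y v; rw [hσ, Matrix.nonsing_inv_eq_ringInverse]
  rw [Ring.lie_def]
  simp only [hσ', hη']
  exact aux_matrix s hs hinv x w
end
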